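/- Let H and H' be finite-dimensional complex inner product spaces, let L : ℕ with L ≥ 1 and ε : ℝ with 0 ≤ ε and L * ε ≤ 1/2. Let φ : Fin L → H be unit vectors with ‖⟪φ i, φ j⟫_ℂ‖ ≤ ε for all i ≠ j, let χ : Fin L → H' be an orthonormal family, and let U : H →ₗᵢ H' be a linear isometry satisfying ‖U (φ i) − χ i‖ ≤ 2 * L * ε for every i. Let a : Fin L → ℂ be coefficients such that ‖∑ i, a i • φ i‖ = 1. Then (∑ i, ‖a i‖^2)^(-1/2) * ‖⟪∑ i, a i • χ i, U (∑ i, a i • φ i)⟫_ℂ‖ ≥ 1 − 3 * (L : ℝ)^(3/2) * ε. (This is the core estimate in the paper's proof that a decoder which corrects each single error from a short list up to error 2Lε also corrects sparse superpositions of those errors, with overall fidelity at least 1 − 3·L^{3/2}·ε against the superposed auxiliary state.) -/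

import Mathlib

open scoped InnerProductSpace

/-!
By Cauchy–Schwarz, linearity of `U` puts `U (∑ aᵢ φᵢ)` within `‖a‖ √(∑ ‖U φᵢ - χᵢ‖²)` of the target
`∑ aᵢ χᵢ`, whose norm is `‖a‖`, so the normalized overlap is at least
`‖a‖ (1 - √(∑ ‖U φᵢ - χᵢ‖²)) ≥ ‖a‖ (1 - 2 L^(3/2) ε)`. The rows of the Gram matrix of `φ` have
absolute sums at most `1 + L ε`, so Schur's test gives `1 = ‖∑ aᵢ φᵢ‖² ≤ (1 + L ε) ‖a‖²`, whence
`‖a‖ ≥ 1 - L ε`. The two losses add up to at most `3 L^(3/2) ε`.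
-/

theorem one_sub_le_of_one_le_one_add_mul_sq {x r : ℝ} (hx : 0 ≤ x) (hr : 0 ≤ r)
    (h : 1 ≤ (1 + x) * r ^ 2) : 1 - x ≤ r := by
  rcases le_total r 1 with hr1 | hr1
  · have hsq : r ^ 2 ≤ r := pow_le_of_le_one hr hr1 two_ne_zero
    have hlin : 1 ≤ (1 + x) * r := h.trans (by gcongr)
    linarith [mul_le_of_le_one_right hx hr1]
  · linarith

theorem one_sub_sub_le_of_one_sub_mul_le {x y r t : ℝ} (hx : 0 ≤ x) (hy : 0 ≤ y) (ht : 0 ≤ t)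
    (hxr : 1 - x ≤ r) (hrt : (1 - y) * r ≤ t) : 1 - x - y ≤ t := by
  rcases le_total y 1 with hy1 | hy1
  · calc
      1 - x - y ≤ (1 - y) * (1 - x) := by linarith [mul_nonneg hx hy]
      _ ≤ (1 - y) * r := mul_le_mul_of_nonneg_left hxr (sub_nonneg.2 hy1)
      _ ≤ t := hrt
  · linarith

theorem rpow_three_halves {x : ℝ} (hx : 0 ≤ x) : x ^ ((3 : ℝ) / 2) = x * √x := by
  rw [Real.sqrt_eq_rpow, ← Real.rpow_one_add' hx (by norm_num)]
  norm_num

theorem norm_sum_smul_le_sqrt_mul_sqrt {𝕜 E ι : Type*} [SeminormedRing 𝕜]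
    [SeminormedAddCommGroup E] [Module 𝕜 E] [IsBoundedSMul 𝕜 E]
    (s : Finset ι) (a : ι → 𝕜) (v : ι → E) :
    ‖∑ i ∈ s, a i • v i‖ ≤ √(∑ i ∈ s, ‖a i‖ ^ 2) * √(∑ i ∈ s, ‖v i‖ ^ 2) :=
  calc
    ‖∑ i ∈ s, a i • v i‖ ≤ ∑ i ∈ s, ‖a i‖ * ‖v i‖ :=
      norm_sum_le_of_le s fun i _ => norm_smul_le (a i) (v i)
    _ ≤ _ := Real.sum_mul_le_sqrt_mul_sqrt s _ _

theorem sqrt_sum_norm_sq_le_sqrt_card_mul {E ι : Type*} [SeminormedAddGroup E] [Fintype ι]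
    {v : ι → E} {δ : ℝ} (hδ : 0 ≤ δ) (hv : ∀ i, ‖v i‖ ≤ δ) :
    √(∑ i, ‖v i‖ ^ 2) ≤ √(Fintype.card ι) * δ :=
  calc
    √(∑ i, ‖v i‖ ^ 2) ≤ √(∑ _i : ι, δ ^ 2) := by
      gcongr with i
      exact hv i
    _ = √(Fintype.card ι) * δ := by simp [Real.sqrt_sq hδ]

section InnerProduct

variable {𝕜 E F ι : Type*} [RCLike 𝕜]
  [SeminormedAddCommGroup E] [InnerProductSpace 𝕜 E]
  [SeminormedAddCommGroup F] [InnerProductSpace 𝕜 F]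

theorem norm_inner_self_eq_norm_sq (x : E) : ‖⟪x, x⟫_𝕜‖ = ‖x‖ ^ 2 := by
  rw [← inner_self_re_eq_norm, inner_self_eq_norm_sq]

theorem norm_sub_norm_sub_le_inv_norm_mul_norm_inner (v w : E) :
    ‖v‖ - ‖w - v‖ ≤ ‖v‖⁻¹ * ‖⟪v, w⟫_𝕜‖ := by
  rcases (norm_nonneg v).eq_or_lt with hv | hv
  · simp [← hv]
  · have hinner : ⟪v, w⟫_𝕜 = ⟪v, v⟫_𝕜 + ⟪v, w - v⟫_𝕜 := by
      rw [inner_sub_right, add_sub_cancel]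
    rw [inv_mul_eq_div, le_div_iff₀ hv]
    calc
      (‖v‖ - ‖w - v‖) * ‖v‖ = ‖v‖ ^ 2 - ‖v‖ * ‖w - v‖ := by ring
      _ ≤ ‖⟪v, v⟫_𝕜‖ - ‖⟪v, w - v⟫_𝕜‖ := by
        rw [norm_inner_self_eq_norm_sq]
        gcongr
        exact norm_inner_le_norm v (w - v)
      _ ≤ ‖⟪v, w⟫_𝕜‖ := hinner ▸ norm_sub_le_norm_add _ _

theorem norm_sum_smul_of_orthonormal {χ : ι → E} (hχ : Orthonormal 𝕜 χ) (s : Finset ι)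
    (a : ι → 𝕜) : ‖∑ i ∈ s, a i • χ i‖ = √(∑ i ∈ s, ‖a i‖ ^ 2) := by
  rw [norm_eq_sqrt_re_inner (𝕜 := 𝕜), hχ.inner_sum]
  simp only [RCLike.conj_mul, map_sum, ← RCLike.ofReal_pow, RCLike.ofReal_re]

theorem norm_sum_smul_sq_le_sum_sum_norm_inner (s : Finset ι) (a : ι → 𝕜) (φ : ι → E) :
    ‖∑ i ∈ s, a i • φ i‖ ^ 2 ≤ ∑ i ∈ s, ∑ j ∈ s, ‖a i‖ * ‖a j‖ * ‖⟪φ i, φ j⟫_𝕜‖ := by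
  rw [← norm_inner_self_eq_norm_sq (𝕜 := 𝕜), sum_inner]
  refine norm_sum_le_of_le s fun i _ => ?_
  rw [inner_sum]
  refine norm_sum_le_of_le s fun j _ => ?_
  rw [inner_smul_left, inner_smul_right, norm_mul, norm_mul, RCLike.norm_conj, mul_assoc]

theorem norm_sum_smul_sq_le_of_sum_norm_inner_le {s : Finset ι} {φ : ι → E} {C : ℝ}
    (hC : ∀ i ∈ s, ∑ j ∈ s, ‖⟪φ i, φ j⟫_𝕜‖ ≤ C) (a : ι → 𝕜) :
    ‖∑ i ∈ s, a i • φ i‖ ^ 2 ≤ C * ∑ i ∈ s, ‖a i‖ ^ 2 := by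
  set S := ∑ i ∈ s, ∑ j ∈ s, ‖a i‖ ^ 2 * ‖⟪φ i, φ j⟫_𝕜‖ with hS
  have hsymm : ∑ i ∈ s, ∑ j ∈ s, ‖a j‖ ^ 2 * ‖⟪φ i, φ j⟫_𝕜‖ = S := by
    rw [Finset.sum_comm]
    simp only [hS, norm_inner_symm]
  calc
    ‖∑ i ∈ s, a i • φ i‖ ^ 2 ≤ ∑ i ∈ s, ∑ j ∈ s, ‖a i‖ * ‖a j‖ * ‖⟪φ i, φ j⟫_𝕜‖ :=
      norm_sum_smul_sq_le_sum_sum_norm_inner s a φ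
    _ ≤ ∑ i ∈ s, ∑ j ∈ s, (‖a i‖ ^ 2 + ‖a j‖ ^ 2) / 2 * ‖⟪φ i, φ j⟫_𝕜‖ := by
      gcongr with i _ j _
      linarith [two_mul_le_add_sq ‖a i‖ ‖a j‖]
    _ = (S + ∑ i ∈ s, ∑ j ∈ s, ‖a j‖ ^ 2 * ‖⟪φ i, φ j⟫_𝕜‖) / 2 := by
      simp only [hS, ← Finset.sum_add_distrib, Finset.sum_div]
      congr! 2
      ring
    _ = ∑ i ∈ s, ‖a i‖ ^ 2 * ∑ j ∈ s, ‖⟪φ i, φ j⟫_𝕜‖ := by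
      rw [hsymm, add_self_div_two, hS]
      simp only [Finset.mul_sum]
    _ ≤ ∑ i ∈ s, ‖a i‖ ^ 2 * C := by
      gcongr with i hi
      exact hC i hi
    _ = C * ∑ i ∈ s, ‖a i‖ ^ 2 := by rw [← Finset.sum_mul, mul_comm]

variable [Fintype ι]

theorem sum_norm_inner_le_one_add_card_mul {φ : ι → E} {ε : ℝ} (hε : 0 ≤ ε)
    (hφ : ∀ i, ‖φ i‖ ≤ 1) (hortho : ∀ i j, i ≠ j → ‖⟪φ i, φ j⟫_𝕜‖ ≤ ε) (i : ι) :
    ∑ j, ‖⟪φ i, φ j⟫_𝕜‖ ≤ 1 + Fintype.card ι * ε := by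
  classical
  have hentry (j : ι) : ‖⟪φ i, φ j⟫_𝕜‖ ≤ (if i = j then 1 else 0) + ε := by
    split_ifs with hij
    · subst hij
      rw [norm_inner_self_eq_norm_sq]
      linarith [pow_le_one₀ (n := 2) (norm_nonneg _) (hφ i)]
    · simpa using hortho i j hij
  calc
    ∑ j, ‖⟪φ i, φ j⟫_𝕜‖ ≤ ∑ j, ((if i = j then 1 else 0) + ε) :=
      Finset.sum_le_sum fun j _ => hentry j
    _ = 1 + Fintype.card ι * ε := by simp [Finset.sum_add_distrib]

theorem one_sub_card_mul_le_sqrt_sum_sq {φ : ι → E} {ε : ℝ} (hε : 0 ≤ ε)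
    (hφ : ∀ i, ‖φ i‖ ≤ 1) (hortho : ∀ i j, i ≠ j → ‖⟪φ i, φ j⟫_𝕜‖ ≤ ε)
    {a : ι → 𝕜} (ha : ‖∑ i, a i • φ i‖ = 1) :
    1 - Fintype.card ι * ε ≤ √(∑ i, ‖a i‖ ^ 2) := by
  have hschur : ‖∑ i, a i • φ i‖ ^ 2 ≤ (1 + Fintype.card ι * ε) * ∑ i, ‖a i‖ ^ 2 :=
    norm_sum_smul_sq_le_of_sum_norm_inner_le
      (fun i _ => sum_norm_inner_le_one_add_card_mul hε hφ hortho i) a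
  refine one_sub_le_of_one_le_one_add_mul_sq (by positivity) (Real.sqrt_nonneg _) ?_
  rwa [ha, one_pow, ← Real.sq_sqrt (show 0 ≤ ∑ i, ‖a i‖ ^ 2 by positivity)] at hschur

theorem one_sub_mul_sqrt_le_inv_sqrt_mul_norm_inner (φ : ι → E) {χ : ι → F}
    (hχ : Orthonormal 𝕜 χ) (U : E →ₗ[𝕜] F) (a : ι → 𝕜) :
    (1 - √(∑ i, ‖U (φ i) - χ i‖ ^ 2)) * √(∑ i, ‖a i‖ ^ 2) ≤
      (√(∑ i, ‖a i‖ ^ 2))⁻¹ * ‖⟪∑ i, a i • χ i, U (∑ i, a i • φ i)⟫_𝕜‖ := by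
  have herror : U (∑ i, a i • φ i) - ∑ i, a i • χ i = ∑ i, a i • (U (φ i) - χ i) := by
    simp only [map_sum, map_smul, smul_sub, Finset.sum_sub_distrib]
  have hdist : ‖U (∑ i, a i • φ i) - ∑ i, a i • χ i‖ ≤
      √(∑ i, ‖a i‖ ^ 2) * √(∑ i, ‖U (φ i) - χ i‖ ^ 2) :=
    herror ▸ norm_sum_smul_le_sqrt_mul_sqrt _ a _
  have hoverlap : ‖∑ i, a i • χ i‖ - ‖U (∑ i, a i • φ i) - ∑ i, a i • χ i‖ ≤
      ‖∑ i, a i • χ i‖⁻¹ * ‖⟪∑ i, a i • χ i, U (∑ i, a i • φ i)⟫_𝕜‖ :=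
    norm_sub_norm_sub_le_inv_norm_mul_norm_inner _ _
  rw [norm_sum_smul_of_orthonormal hχ] at hoverlap
  linarith

theorem sparse_superposition_recovery_general {φ : ι → E} {χ : ι → F} {ε : ℝ} (hε : 0 ≤ ε)
    (hφ : ∀ i, ‖φ i‖ ≤ 1) (hortho : ∀ i j, i ≠ j → ‖⟪φ i, φ j⟫_𝕜‖ ≤ ε)
    (hχ : Orthonormal 𝕜 χ) (U : E →ₗ[𝕜] F)
    (hU : ∀ i, ‖U (φ i) - χ i‖ ≤ 2 * Fintype.card ι * ε)
    {a : ι → 𝕜} (ha : ‖∑ i, a i • φ i‖ = 1) :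
    1 - 3 * (Fintype.card ι : ℝ) ^ ((3 : ℝ) / 2) * ε ≤
      (∑ i, ‖a i‖ ^ 2 : ℝ) ^ (-(1 : ℝ) / 2) * ‖⟪∑ i, a i • χ i, U (∑ i, a i • φ i)⟫_𝕜‖ := by
  set n : ℝ := (Fintype.card ι : ℝ) with hn
  have hn_le : n ≤ n * √n := by
    rcases isEmpty_or_nonempty ι with _ | _
    · simp [hn]
    · exact le_mul_of_one_le_right (by positivity)
        (Real.one_le_sqrt.2 (Nat.one_le_cast.2 Fintype.card_pos))
  have herror : √(∑ i, ‖U (φ i) - χ i‖ ^ 2) ≤ √n * (2 * n * ε) :=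
    sqrt_sum_norm_sq_le_sqrt_card_mul (by positivity) hU
  have hfidelity : 1 - n * ε - √(∑ i, ‖U (φ i) - χ i‖ ^ 2) ≤
      (√(∑ i, ‖a i‖ ^ 2))⁻¹ * ‖⟪∑ i, a i • χ i, U (∑ i, a i • φ i)⟫_𝕜‖ :=
    one_sub_sub_le_of_one_sub_mul_le (by positivity) (Real.sqrt_nonneg _) (by positivity)
      (one_sub_card_mul_le_sqrt_sum_sq hε hφ hortho ha)
      (one_sub_mul_sqrt_le_inv_sqrt_mul_norm_inner φ hχ U a)
  rw [neg_div, Real.rpow_neg (by positivity), ← Real.sqrt_eq_rpow,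
    rpow_three_halves (Nat.cast_nonneg _)]
  linarith [mul_le_mul_of_nonneg_right hn_le hε]

end InnerProduct

/-- Core estimate for decoding sparse superpositions of errors: if a linear isometry `U`
corrects each of `L` approximately pairwise-orthogonal corrupted code-states `φ i` to
orthonormal targets `χ i` up to error `2·L·ε`, then it corrects any normalized superposition
`∑ aᵢ φᵢ` with fidelity at least `1 − 3·L^(3/2)·ε` against the superposed target. -/
theorem sparse_superposition_recovery
    {H H' : Type*} [NormedAddCommGroup H] [InnerProductSpace ℂ H] [FiniteDimensional ℂ H]
    [NormedAddCommGroup H'] [InnerProductSpace ℂ H'] [FiniteDimensional ℂ H']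
    (L : ℕ) (hL : 1 ≤ L) (ε : ℝ) (hε : 0 ≤ ε) (hLε : (L : ℝ) * ε ≤ 1 / 2)
    (φ : Fin L → H) (hφ : ∀ i, ‖φ i‖ = 1)
    (hortho : ∀ i j, i ≠ j → ‖⟪φ i, φ j⟫_ℂ‖ ≤ ε)
    (χ : Fin L → H') (hχ : ∀ i j, ⟪χ i, χ j⟫_ℂ = (if i = j then 1 else 0))
    (U : H →ₗᵢ[ℂ] H')
    (hU : ∀ i, ‖U (φ i) - χ i‖ ≤ 2 * L * ε)
    (a : Fin L → ℂ) (ha : ‖∑ i, a i • φ i‖ = 1) :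
    (∑ i, ‖a i‖ ^ 2 : ℝ) ^ (-(1 : ℝ) / 2) *
        ‖⟪∑ i, a i • χ i, U (∑ i, a i • φ i)⟫_ℂ‖ ≥
      1 - 3 * (L : ℝ) ^ ((3 : ℝ) / 2) * ε := by
  simpa only [Fintype.card_fin, LinearIsometry.coe_toLinearMap] using
    sparse_superposition_recovery_general hε (fun i => (hφ i).le) hortho
      (orthonormal_iff_ite.2 hχ) U.toLinearMap (by simpa using hU) ha
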